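/- Let G be a finite simple graph with n vertices, let r ≥ 2 be an integer, and let t, x_1, …, x_{r-1} be complex numbers. Then Σ_{f : E → Fin r} Π_{v ∈ V} w_v(f) = Σ_{λ, |λ| ≤ n} t^{n−|λ|} p_λ(x_1, …, x_{r−1}) N_λ(G), where the sum on the right runs over all partitions λ of weight at most n. -/

import Mathlib

open scoped Classical

/-- The finset of edges of `G` incident to the vertex `v`. -/
noncomputable def incidentEdges {V : Type*} [Fintype V] [DecidableEq V]
    (G : SimpleGraph V) (v : V) : Finset G.edgeSet :=
  Finset.univ.filter (fun e => v ∈ (e : Sym2 V))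

/-- The local weight `w_v(f)`: colors are the elements of `Fin (m+1)`, the last color
playing the role of the color `r = m+1`.  The weight is `t` if every edge incident to `v`
has the last color (in particular if `v` is isolated), `x i` if the multiset of colors of
the edges incident to `v` consists of exactly two copies of the color `i` (with
`i ∈ {1, …, r-1}`) together with `deg v - 2` copies of the last color, and `0` otherwise. -/
noncomputable def localWeight {V : Type*} [Fintype V] [DecidableEq V]
    (G : SimpleGraph V) {m : ℕ} (t : ℂ) (x : Fin m → ℂ)
    (f : G.edgeSet → Fin (m + 1)) (v : V) : ℂ :=
  if ∀ e ∈ incidentEdges G v, f e = Fin.last m then t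
  else ∑ i : Fin m,
    if ((incidentEdges G v).filter (fun e => f e = i.castSucc)).card = 2 ∧
        (∀ e ∈ incidentEdges G v, f e = i.castSucc ∨ f e = Fin.last m)
    then x i else 0

/-- A (multi)cycle in `G`: a set of edges such that every vertex incident to an edge of
the set is incident to exactly two edges of the set.  It need not be connected. -/
def IsMultiCycle {V : Type*} [Fintype V] [DecidableEq V]
    (G : SimpleGraph V) (C : Finset G.edgeSet) : Prop :=
  ∀ v : V, (∃ e ∈ C, v ∈ (e : Sym2 V)) →
    (C.filter (fun e => v ∈ (e : Sym2 V))).card = 2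

/-- The graph on `V` whose edges are the edges of `C`. -/
def cycleGraph {V : Type*} [Fintype V] [DecidableEq V]
    (G : SimpleGraph V) (C : Finset G.edgeSet) : SimpleGraph V :=
  SimpleGraph.fromEdgeSet (↑(C.image (fun e => (e : Sym2 V))))

/-- The number of edges of `C` lying in the connected component `K` of `cycleGraph G C`. -/
noncomputable def componentEdgeCount {V : Type*} [Fintype V] [DecidableEq V]
    (G : SimpleGraph V) (C : Finset G.edgeSet)
    (K : (cycleGraph G C).ConnectedComponent) : ℕ :=
  (C.filter (fun e => ∀ v ∈ (e : Sym2 V),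
    (cycleGraph G C).connectedComponentMk v = K)).card

/-- The type of the cycle `C`: the multiset recording the numbers of edges of the
connected components of `C`. -/
noncomputable def cycleType {V : Type*} [Fintype V] [DecidableEq V]
    (G : SimpleGraph V) (C : Finset G.edgeSet) : Multiset ℕ :=
  Multiset.filter (· ≠ 0)
    ((Finset.univ : Finset (cycleGraph G C).ConnectedComponent).val.map
      (componentEdgeCount G C))

/-- `N_λ(G)`: the number of cycles of type `λ` in `G`. -/
noncomputable def cycleCount {V : Type*} [Fintype V] [DecidableEq V]
    (G : SimpleGraph V) {k : ℕ} (lam : Nat.Partition k) : ℕ :=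
  (Finset.univ.filter (fun C : Finset G.edgeSet =>
    IsMultiCycle G C ∧ cycleType G C = lam.parts)).card

/-!
Let `C` be the set of edges not of the last color. If no local weight of `f` vanishes, then `C` is a
multicycle with `f` constant on every component, and each color class of `C` is a multicycle as
well. A multicycle covers as many vertices as it has edges, because both numbers are half the number
of incidences; applied to each color class, this turns `∏ v, w_v(f)` into
`t ^ (n - |C|) * ∏ e ∈ C, x_{f e}`. For fixed `C` such an `f` is a free choice of one color per
component, and summing over the choices yields one power sum for each component.
-/

section MultisetsAndSums

open Finset

/-- The elements to which a partial coloring assigns a color; the value `none` plays the role of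
the last color `r`. -/
def coloredElements {E ι : Type*} [Fintype E] (f : E → Option ι) : Finset E :=
  {e | f e ≠ none}

lemma mem_coloredElements {E ι : Type*} [Fintype E] {f : E → Option ι} {e : E} :
    e ∈ coloredElements f ↔ f e ≠ none := by
  simp [coloredElements]

lemma sum_comp_eq_sum_partition {α M : Type*} [AddCommMonoid M] (s : Finset α)
    (τ : α → Multiset ℕ) {N : ℕ} (hpos : ∀ a ∈ s, 0 ∉ τ a) (hsum : ∀ a ∈ s, (τ a).sum < N)
    (g : Multiset ℕ → M) :
    ∑ a ∈ s, g (τ a) =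
      ∑ k ∈ range N, ∑ lam : Nat.Partition k, #{a ∈ s | τ a = lam.parts} • g lam.parts := by
  let shape (a : α) : (k : ℕ) × Nat.Partition k := ⟨(τ a).sum, .ofMultiset (τ a)⟩
  have shape_eq_iff {a : α} (ha : a ∈ s) (p : (k : ℕ) × Nat.Partition k) :
      shape a = p ↔ τ a = p.2.parts := by
    have parts_shape : (shape a).2.parts = τ a :=
      Multiset.filter_eq_self.2 fun n hn hn0 => hpos a ha (hn0 ▸ hn)
    refine ⟨fun h => by rw [← h, parts_shape], fun h => ?_⟩
    obtain ⟨k, lam⟩ := p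
    obtain rfl : (τ a).sum = k := by rw [h, lam.parts_sum]
    exact congrArg _ (Nat.Partition.ext (parts_shape.trans h))
  have shape_mem : ∀ a ∈ s, shape a ∈ (range N).sigma fun k => (univ : Finset (Nat.Partition k)) :=
    fun a ha => mem_sigma.2 ⟨mem_range.2 (hsum a ha), mem_univ _⟩
  rw [← sum_fiberwise_of_maps_to shape_mem, sum_sigma]
  refine sum_congr rfl fun k _ => sum_congr rfl fun lam _ => ?_
  rw [filter_congr fun a ha => shape_eq_iff ha ⟨k, lam⟩, ← sum_const]
  exact sum_congr rfl fun a ha => by rw [(mem_filter.1 ha).2]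

/-- The partial coloring with support `s` that gives each block `s ∩ π⁻¹(K)` the single color
`c K`. -/
def blockColoring {E κ ι : Type*} [DecidableEq E] [DecidableEq κ] (s : Finset E) (π : E → κ)
    (c : s.image π → ι) (e : E) : Option ι :=
  if he : e ∈ s then some (c ⟨π e, mem_image_of_mem π he⟩) else none

section BlockColoring

variable {E κ ι : Type*} [DecidableEq E] [DecidableEq κ] {s : Finset E} {π : E → κ}

lemma blockColoring_of_mem (c : s.image π → ι) {e : E} (he : e ∈ s) :
    blockColoring s π c e = some (c ⟨π e, mem_image_of_mem π he⟩) :=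
  dif_pos he

lemma coloredElements_blockColoring [Fintype E] (c : s.image π → ι) :
    coloredElements (blockColoring s π c) = s := by
  ext e
  simp [mem_coloredElements, blockColoring]

lemma blockColoring_injective :
    Function.Injective (blockColoring s π : (s.image π → ι) → E → Option ι) := by
  intro c c' h
  funext ⟨K, hK⟩
  obtain ⟨e, he, rfl⟩ := mem_image.1 hK
  simpa only [blockColoring_of_mem _ he, Option.some.injEq] using congrFun h e

lemma exists_blockColoring_eq [Fintype E] {f : E → Option ι} (hs : coloredElements f = s)
    (hf : ∀ e ∈ s, ∀ e' ∈ s, π e = π e' → f e = f e') : ∃ c, blockColoring s π c = f := by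
  have exists_color : ∀ K : s.image π, ∃ i, ∀ e ∈ s, π e = K → f e = some i := by
    rintro ⟨K, hK⟩
    obtain ⟨e, he, rfl⟩ := mem_image.1 hK
    obtain ⟨i, hi⟩ := Option.ne_none_iff_exists'.1 (mem_coloredElements.1 (hs ▸ he))
    exact ⟨i, fun e' he' h => (hf e' he' e he h).trans hi⟩
  choose c hc using exists_color
  refine ⟨c, funext fun e => ?_⟩
  by_cases he : e ∈ s
  · rw [blockColoring_of_mem c he, hc ⟨π e, mem_image_of_mem π he⟩ e he rfl]
  · have uncolored : f e = none := by simpa [← hs, mem_coloredElements] using he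
    rw [blockColoring, dif_neg he, uncolored]

lemma prod_elim_blockColoring {M : Type*} [CommMonoid M] (c : s.image π → ι) (x : ι → M) :
    ∏ e ∈ s, (blockColoring s π c e).elim 1 x =
      ∏ K : s.image π, x (c K) ^ #{e ∈ s | π e = K} := by
  let blockValue (K : κ) : M := if hK : K ∈ s.image π then x (c ⟨K, hK⟩) else 1
  calc ∏ e ∈ s, (blockColoring s π c e).elim 1 x
      = ∏ e ∈ s, blockValue (π e) := prod_congr rfl fun e he => by
        simp only [blockColoring_of_mem c he, blockValue, dif_pos (mem_image_of_mem π he),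
          Option.elim_some]
    _ = ∏ K ∈ s.image π, blockValue K ^ #{e ∈ s | π e = K} := prod_comp blockValue π
    _ = ∏ K : s.image π, blockValue K ^ #{e ∈ s | π e = K} := (prod_coe_sort _ _).symm
    _ = ∏ K : s.image π, x (c K) ^ #{e ∈ s | π e = K} :=
        prod_congr rfl fun K _ => by simp only [blockValue, dif_pos K.2, Subtype.coe_eta]

lemma sum_prod_elim_of_const_on_fibers [Fintype E] [Fintype ι] {R : Type*} [CommSemiring R]
    (s : Finset E) (π : E → κ) (x : ι → R) :
    ∑ f : E → Option ι with coloredElements f = s ∧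
        ∀ e ∈ s, ∀ e' ∈ s, π e = π e' → f e = f e', ∏ e ∈ s, (f e).elim 1 x =
      ∏ K ∈ s.image π, ∑ i, x i ^ #{e ∈ s | π e = K} := by
  rw [← prod_coe_sort, Fintype.prod_sum]
  symm
  refine sum_nbij (blockColoring s π) (fun c _ => ?_) blockColoring_injective.injOn
    (fun f hf => ?_) fun c _ => (prod_elim_blockColoring c x).symm
  · refine mem_filter.2 ⟨mem_univ _, coloredElements_blockColoring c, fun e he e' he' h => ?_⟩
    simp only [blockColoring_of_mem c he, blockColoring_of_mem c he', h]
  · obtain ⟨-, hs, hf⟩ := mem_filter.1 hf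
    obtain ⟨c, rfl⟩ := exists_blockColoring_eq hs hf
    exact ⟨c, mem_coe.2 (mem_univ c), rfl⟩

end BlockColoring

end MultisetsAndSums

section Cycles

open Finset

-- In `IsMultiCycle` and `componentEdgeCount` the bound variable of the filter ranges over `Sym2 V`,
-- so `C` is coerced to a `Finset (Sym2 V)` through the monad structure of `Finset`.
lemma card_filter_lift {α : Type*} {p : α → Prop} (s : Finset (Subtype p)) (q : α → Prop)
    [DecidablePred q] :
    #((do let a ← s; pure (a : α) : Finset α).filter q) = #{a ∈ s | q a.1} := by
  rw [bind_pure_comp, fmap_def, filter_image, card_image_of_injective _ Subtype.val_injective]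

variable {V : Type*} {G : SimpleGraph V} {C : Finset G.edgeSet}

/-- Edges of `C` that share a vertex have the same color: the condition that nonzero local weights
impose on the colors of the edges. -/
def IsMonochromatic {α : Type*} (C : Finset G.edgeSet) (f : G.edgeSet → α) : Prop :=
  ∀ e ∈ C, ∀ e' ∈ C, ∀ v ∈ e.1, v ∈ e'.1 → f e = f e'

variable [Fintype V] [DecidableEq V]

lemma isMultiCycle_iff : IsMultiCycle G C ↔
    ∀ v : V, (∃ e ∈ C, v ∈ e.1) → #{e ∈ C | v ∈ e.1} = 2 :=
  forall_congr' fun v => imp_congr_right fun _ => by rw [card_filter_lift C (v ∈ ·)]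

/-- The vertices incident to an edge of `C`. -/
noncomputable def coveredVertices (C : Finset G.edgeSet) : Finset V :=
  {v | ∃ e ∈ C, v ∈ e.1}

lemma mem_coveredVertices {v : V} : v ∈ coveredVertices C ↔ ∃ e ∈ C, v ∈ e.1 := by
  simp [coveredVertices]

lemma IsMultiCycle.filter (hC : IsMultiCycle G C) {p : G.edgeSet → Prop}
    (hp : ∀ e ∈ C, ∀ e' ∈ C, ∀ v ∈ e.1, v ∈ e'.1 → p e → p e') :
    IsMultiCycle G (C.filter p) := by
  rw [isMultiCycle_iff] at hC ⊢
  rintro v ⟨e, he, hv⟩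
  obtain ⟨heC, hpe⟩ := mem_filter.1 he
  rw [← hC v ⟨e, heC, hv⟩, filter_filter]
  refine congrArg card (filter_congr fun e' he' => ?_)
  exact and_iff_right_of_imp fun hv' => hp e heC e' he' v hv hv' hpe

lemma IsMultiCycle.card_coveredVertices (hC : IsMultiCycle G C) : #(coveredVertices C) = #C := by
  refine mul_right_cancel₀ two_ne_zero
    (card_mul_eq_card_mul (fun (v : V) (e : G.edgeSet) => v ∈ e.1) (fun v hv => ?_)
      fun e he => ?_)
  · exact isMultiCycle_iff.1 hC v (mem_coveredVertices.1 hv)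
  · rw [← Sym2.card_toFinset_of_not_isDiag _ (G.not_isDiag_of_mem_edgeSet e.2)]
    congr 1
    ext v
    simp only [mem_bipartiteBelow, mem_coveredVertices, Sym2.mem_toFinset]
    exact and_iff_right_of_imp fun hv => ⟨e, he, hv⟩

-- The edges with a prescribed value of `ψ` form a multicycle covering exactly the vertices with
-- that value of `φ`, so every value is taken equally often.
lemma IsMultiCycle.map_coveredVertices_eq_map (hC : IsMultiCycle G C) {α : Type*} {φ : V → α}
    {ψ : G.edgeSet → α} (h : ∀ e ∈ C, ∀ v ∈ e.1, φ v = ψ e) :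
    (coveredVertices C).val.map φ = C.val.map ψ := by
  ext a
  have filter_coveredVertices :
      {v ∈ coveredVertices C | a = φ v} = coveredVertices {e ∈ C | a = ψ e} := by
    ext v
    simp only [mem_filter, mem_coveredVertices]
    constructor
    · rintro ⟨⟨e, he, hv⟩, rfl⟩
      exact ⟨e, ⟨he, h e he v hv⟩, hv⟩
    · rintro ⟨e, ⟨he, rfl⟩, hv⟩
      exact ⟨⟨e, he, hv⟩, (h e he v hv).symm⟩
  have isMultiCycle_filter : IsMultiCycle G {e ∈ C | a = ψ e} :=
    hC.filter fun e he e' he' v hv hv' ha => by rw [ha, ← h e he v hv, h e' he' v hv']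
  rw [Multiset.count_map, Multiset.count_map, ← filter_val, ← filter_val, card_val, card_val,
    filter_coveredVertices, isMultiCycle_filter.card_coveredVertices]

lemma IsMultiCycle.prod_coveredVertices_eq_prod (hC : IsMultiCycle G C) {M : Type*} [CommMonoid M]
    {φ : V → M} {ψ : G.edgeSet → M} (h : ∀ e ∈ C, ∀ v ∈ e.1, φ v = ψ e) :
    ∏ v ∈ coveredVertices C, φ v = ∏ e ∈ C, ψ e :=
  congrArg Multiset.prod (hC.map_coveredVertices_eq_map h)

/-- The component of `cycleGraph G C` containing the edge `e`. The choice of the endpoint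
`e.out.1` matters only for `e ∉ C`, where the value carries no information. -/
noncomputable def edgeComponent (C : Finset G.edgeSet) (e : G.edgeSet) :
    (cycleGraph G C).ConnectedComponent :=
  (cycleGraph G C).connectedComponentMk e.1.out.1

lemma cycleGraph_adj {u v : V} :
    (cycleGraph G C).Adj u v ↔ u ≠ v ∧ ∃ e ∈ C, e.1 = s(u, v) := by
  simp [cycleGraph, and_comm]

lemma edgeComponent_eq_of_mem {e : G.edgeSet} (he : e ∈ C) {v : V} (hv : v ∈ e.1) :
    edgeComponent C e = (cycleGraph G C).connectedComponentMk v := by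
  by_cases h : e.1.out.1 = v
  · rw [edgeComponent, h]
  · refine SimpleGraph.ConnectedComponent.eq.2 (SimpleGraph.Adj.reachable ?_)
    exact cycleGraph_adj.2 ⟨h, e, he, (Sym2.mem_and_mem_iff h).1 ⟨Sym2.out_fst_mem _, hv⟩⟩

lemma componentEdgeCount_eq (K : (cycleGraph G C).ConnectedComponent) :
    componentEdgeCount G C K = #{e ∈ C | edgeComponent C e = K} := by
  refine (card_filter_lift C
    (∀ v ∈ ·, (cycleGraph G C).connectedComponentMk v = K)).trans
    (congrArg card (filter_congr fun e he => ?_))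
  exact ⟨fun h => h _ (Sym2.out_fst_mem _),
    fun h v hv => by rw [← edgeComponent_eq_of_mem he hv, h]⟩

lemma cycleType_eq_map_image_edgeComponent : cycleType G C =
    (C.image (edgeComponent C)).val.map fun K => #{e ∈ C | edgeComponent C e = K} := by
  have image_eq : C.image (edgeComponent C) = univ.filter fun K =>
      componentEdgeCount G C K ≠ 0 := by
    ext K
    simp [componentEdgeCount_eq, filter_eq_empty_iff]
  rw [cycleType, Multiset.filter_map, image_eq, filter_val]
  exact Multiset.map_congr rfl fun K _ => componentEdgeCount_eq K

lemma sum_cycleType : (cycleType G C).sum = #C := by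
  rw [cycleType_eq_map_image_edgeComponent, card_eq_sum_card_image (edgeComponent C),
    sum_eq_multiset_sum]

lemma IsMonochromatic.eq_of_reachable {α : Type*} {f : G.edgeSet → α} (hf : IsMonochromatic C f)
    {u v : V} (huv : (cycleGraph G C).Reachable u v) {e e' : G.edgeSet} (he : e ∈ C) (he' : e' ∈ C)
    (hu : u ∈ e.1) (hv : v ∈ e'.1) : f e = f e' := by
  obtain ⟨p⟩ := huv
  induction p generalizing e with
  | nil => exact hf e he e' he' _ hu hv
  | cons hadj _ ih =>
    obtain ⟨-, d, hd, hd_eq⟩ := cycleGraph_adj.1 hadj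
    exact (hf e he d hd _ hu (by simp [hd_eq])).trans
      (ih hd (by simp [hd_eq]) hv)

lemma isMonochromatic_iff_edgeComponent {α : Type*} {f : G.edgeSet → α} : IsMonochromatic C f ↔
    ∀ e ∈ C, ∀ e' ∈ C, edgeComponent C e = edgeComponent C e' → f e = f e' := by
  constructor
  · intro hf e he e' he' h
    exact hf.eq_of_reachable (SimpleGraph.ConnectedComponent.eq.1 h) he he' (Sym2.out_fst_mem _)
      (Sym2.out_fst_mem _)
  · intro hf e he e' he' v hv hv'
    exact hf e he e' he' (by rw [edgeComponent_eq_of_mem he hv, edgeComponent_eq_of_mem he' hv'])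

end Cycles

section StateSum

open Finset

variable {V : Type*} [Fintype V] [DecidableEq V] {G : SimpleGraph V} {ι R : Type*} [Fintype ι]
  [CommSemiring R] {t : R} {x : ι → R} {f : G.edgeSet → Option ι} {C : Finset G.edgeSet}

/-- The local weight `w_v(f)` of `localWeight` for an arbitrary finite set `ι` of colors besides the
last one, which is encoded as `none`, and with values in a commutative semiring. -/
noncomputable def vertexWeight (t : R) (x : ι → R) (f : G.edgeSet → Option ι) (v : V) : R :=
  if ∀ e ∈ incidentEdges G v, f e = none then t
  else ∑ i, if #{e ∈ incidentEdges G v | f e = some i} = 2 ∧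
    (∀ e ∈ incidentEdges G v, f e = some i ∨ f e = none) then x i else 0

lemma mem_incidentEdges {e : G.edgeSet} {v : V} : e ∈ incidentEdges G v ↔ v ∈ e.1 := by
  simp [incidentEdges]

lemma vertexWeight_of_notMem {v : V} (hv : v ∉ coveredVertices (coloredElements f)) :
    vertexWeight t x f v = t := by
  refine if_pos fun e he => ?_
  by_contra hfe
  exact hv (mem_coveredVertices.2 ⟨e, mem_coloredElements.2 hfe, mem_incidentEdges.1 he⟩)

lemma vertexWeight_of_mem {e : G.edgeSet} {v : V} (hv : v ∈ e.1) {i : ι} (he : f e = some i) :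
    vertexWeight t x f v =
      if #{d ∈ coloredElements f | v ∈ d.1} = 2 ∧
        ∀ d ∈ coloredElements f, v ∈ d.1 → f d = some i then x i else 0 := by
  have he_inc : e ∈ incidentEdges G v := mem_incidentEdges.2 hv
  have not_all_none : ¬ ∀ d ∈ incidentEdges G v, f d = none := fun h => by
    simp [h e he_inc] at he
  have two_colors_iff : (∀ d ∈ incidentEdges G v, f d = some i ∨ f d = none) ↔
      ∀ d ∈ coloredElements f, v ∈ d.1 → f d = some i := by
    simp only [mem_incidentEdges, mem_coloredElements]
    exact ⟨fun h d hd hvd => (h d hvd).resolve_right hd,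
      fun h d hvd => or_iff_not_imp_right.2 fun hd => h d hd hvd⟩
  rw [vertexWeight, if_neg not_all_none, sum_eq_single i]
  · refine if_congr ((and_congr_right' two_colors_iff).trans (and_congr_left fun h => ?_)) rfl rfl
    have same_edges : {d ∈ incidentEdges G v | f d = some i} =
        {d ∈ coloredElements f | v ∈ d.1} := by
      ext d
      simp only [mem_filter, mem_incidentEdges, mem_coloredElements]
      exact ⟨fun ⟨hvd, hd⟩ => ⟨by simp [hd], hvd⟩,
        fun ⟨hd, hvd⟩ => ⟨hvd, h d (mem_coloredElements.2 hd) hvd⟩⟩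
    rw [same_edges]
  · intro j _ hji
    refine if_neg fun ⟨_, h⟩ => ?_
    simpa [he, hji.symm] using h e he_inc
  · simp

lemma prod_vertexWeight_eq_zero
    (h : ¬ (IsMultiCycle G (coloredElements f) ∧ IsMonochromatic (coloredElements f) f)) :
    ∏ v, vertexWeight t x f v = 0 := by
  contrapose! h
  have local_condition : ∀ (e : G.edgeSet) (i : ι) (v : V), f e = some i → v ∈ e.1 →
      #{d ∈ coloredElements f | v ∈ d.1} = 2 ∧
        ∀ d ∈ coloredElements f, v ∈ d.1 → f d = some i := by
    intro e i v he hv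
    by_contra hne
    exact h (prod_eq_zero (mem_univ v) ((vertexWeight_of_mem hv he).trans (if_neg hne)))
  have exists_color {e : G.edgeSet} (he : e ∈ coloredElements f) : ∃ i, f e = some i :=
    Option.ne_none_iff_exists'.1 (mem_coloredElements.1 he)
  refine ⟨isMultiCycle_iff.2 ?_, ?_⟩
  · rintro v ⟨e, he, hv⟩
    obtain ⟨i, hi⟩ := exists_color he
    exact (local_condition e i v hi hv).1
  · intro e he e' he' v hv hv'
    obtain ⟨i, hi⟩ := exists_color he
    rw [hi, (local_condition e i v hi hv).2 e' he' hv']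

lemma prod_vertexWeight (hC : IsMultiCycle G (coloredElements f))
    (hf : IsMonochromatic (coloredElements f) f) :
    ∏ v, vertexWeight t x f v =
      t ^ (Fintype.card V - #(coloredElements f)) *
        ∏ e ∈ coloredElements f, (f e).elim 1 x := by
  rw [← prod_compl_mul_prod (coveredVertices (coloredElements f))]
  congr 1
  · rw [prod_congr rfl fun v hv => vertexWeight_of_notMem (mem_compl.1 hv), prod_const, card_compl,
      hC.card_coveredVertices]
  · refine hC.prod_coveredVertices_eq_prod fun e he v hv => ?_
    obtain ⟨i, hi⟩ := Option.ne_none_iff_exists'.1 (mem_coloredElements.1 he)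
    rw [vertexWeight_of_mem hv hi, if_pos, hi, Option.elim_some]
    exact ⟨isMultiCycle_iff.1 hC v ⟨e, he, hv⟩,
      fun d hd hvd => (hf d hd e he v hvd hv).trans hi⟩

lemma IsMultiCycle.sum_prod_vertexWeight (hC : IsMultiCycle G C) :
    ∑ f : G.edgeSet → Option ι with coloredElements f = C, ∏ v, vertexWeight t x f v =
      t ^ (Fintype.card V - #C) * ((cycleType G C).map fun j => ∑ i, x i ^ j).prod := by
  calc ∑ f : G.edgeSet → Option ι with coloredElements f = C, ∏ v, vertexWeight t x f v
      = ∑ f : G.edgeSet → Option ι with coloredElements f = C ∧ IsMonochromatic C f,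
          ∏ v, vertexWeight t x f v := by
        rw [← filter_filter, eq_comm]
        refine sum_filter_of_ne fun f hf hne => ?_
        obtain rfl := (mem_filter.1 hf).2
        by_contra hmono
        exact hne (prod_vertexWeight_eq_zero fun h => hmono h.2)
    _ = ∑ f : G.edgeSet → Option ι with coloredElements f = C ∧ IsMonochromatic C f,
          t ^ (Fintype.card V - #C) * ∏ e ∈ C, (f e).elim 1 x := by
        refine sum_congr rfl fun f hf => ?_
        obtain ⟨-, rfl, hmono⟩ := mem_filter.1 hf
        exact prod_vertexWeight hC hmono
    _ = t ^ (Fintype.card V - #C) * ((cycleType G C).map fun j => ∑ i, x i ^ j).prod := by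
        simp only [isMonochromatic_iff_edgeComponent]
        rw [← mul_sum, sum_prod_elim_of_const_on_fibers, cycleType_eq_map_image_edgeComponent,
          Multiset.map_map]
        rfl

lemma sum_prod_vertexWeight_eq_sum_isMultiCycle :
    ∑ f : G.edgeSet → Option ι, ∏ v, vertexWeight t x f v =
      ∑ C with IsMultiCycle G C,
        t ^ (Fintype.card V - #C) * ((cycleType G C).map fun j => ∑ i, x i ^ j).prod := by
  rw [← sum_fiberwise univ coloredElements, sum_filter]
  refine sum_congr rfl fun C _ => ?_
  split_ifs with hC
  · exact hC.sum_prod_vertexWeight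
  · refine sum_eq_zero fun f hf => prod_vertexWeight_eq_zero fun h => hC ?_
    exact (mem_filter.1 hf).2 ▸ h.1

theorem state_sum_eq_cycle_generating_function_general (G : SimpleGraph V) (t : R) (x : ι → R) :
    ∑ f : G.edgeSet → Option ι, ∏ v, vertexWeight t x f v =
      ∑ k ∈ range (Fintype.card V + 1), ∑ lam : Nat.Partition k,
        t ^ (Fintype.card V - k) * (lam.parts.map fun j => ∑ i, x i ^ j).prod *
          (cycleCount G lam : R) := by
  have zero_notMem : ∀ C ∈ ({C | IsMultiCycle G C} : Finset (Finset G.edgeSet)),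
      0 ∉ cycleType G C := fun C _ h => (Multiset.mem_filter.1 h).2 rfl
  have sum_lt : ∀ C ∈ ({C | IsMultiCycle G C} : Finset (Finset G.edgeSet)),
      (cycleType G C).sum < Fintype.card V + 1 := fun C hC => by
    rw [sum_cycleType, ← (mem_filter.1 hC).2.card_coveredVertices]
    exact Nat.lt_succ_of_le (card_le_univ _)
  have by_type := sum_comp_eq_sum_partition _ (cycleType G) zero_notMem sum_lt fun s =>
    t ^ (Fintype.card V - s.sum) * (s.map fun j => ∑ i, x i ^ j).prod
  simp only [sum_cycleType, Nat.Partition.parts_sum, filter_filter] at by_type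
  rw [sum_prod_vertexWeight_eq_sum_isMultiCycle, by_type]
  simp only [cycleCount, nsmul_eq_mul, mul_comm]

lemma localWeight_eq_vertexWeight {m : ℕ} (t : ℂ) (x : Fin m → ℂ) (f : G.edgeSet → Fin (m + 1))
    (v : V) : localWeight G t x f v = vertexWeight t x (finSuccEquivLast ∘ f) v := by
  simp only [localWeight, vertexWeight, Function.comp_apply, ← finSuccEquivLast_last,
    ← finSuccEquivLast_castSucc, finSuccEquivLast.apply_eq_iff_eq]

lemma sum_prod_localWeight_eq_sum_prod_vertexWeight {m : ℕ} (G : SimpleGraph V) (t : ℂ)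
    (x : Fin m → ℂ) :
    ∑ f : G.edgeSet → Fin (m + 1), ∏ v, localWeight G t x f v =
      ∑ f : G.edgeSet → Option (Fin m), ∏ v, vertexWeight t x f v :=
  Fintype.sum_equiv (.arrowCongr (.refl _) finSuccEquivLast) _ _ fun f =>
    prod_congr rfl fun v _ => localWeight_eq_vertexWeight t x f v

end StateSum

/-- Theorem 2 of Zograf's paper: with `r = m + 1 ≥ 2` colors and the weights
`localWeight`, the state sum `Σ_f Π_v w_v(f)` equals
`Σ_{|λ| ≤ n} t^{n-|λ|} p_λ(x_1, …, x_{r-1}) N_λ(G)`. -/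
theorem state_sum_eq_cycle_generating_function
    {V : Type*} [Fintype V] [DecidableEq V] (G : SimpleGraph V)
    (m : ℕ) (hm : 1 ≤ m) (t : ℂ) (x : Fin m → ℂ) :
    (∑ f : G.edgeSet → Fin (m + 1), ∏ v : V, localWeight G t x f v) =
    ∑ k ∈ Finset.range (Fintype.card V + 1), ∑ lam : Nat.Partition k,
      t ^ (Fintype.card V - k) *
        ((lam.parts.map (fun j => ∑ i : Fin m, x i ^ j)).prod) *
        (cycleCount G lam : ℂ) :=
  (sum_prod_localWeight_eq_sum_prod_vertexWeight G t x).trans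
    (state_sum_eq_cycle_generating_function_general G t x)
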